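/- In the group setting above, the map φ: A ×_B C → D defined by φ(a,c) = α(a·r(f(a))⁻¹)·γ(c) is a group homomorphism, assuming α(ker f) and γ(ker g) commute elementwise in D. -/

import Mathlib

theorem stmt1 {A B C D : Type*} [Group A] [Group B] [Group C] [Group D]
    (f : A →* B) (g : C →* B) (r : B →* A) (s : B →* C)
    (hfr : ∀ b, f (r b) = b) (hgs : ∀ b, g (s b) = b)
    (α : A →* D) (γ : C →* D) (hβ : ∀ b, α (r b) = γ (s b))
    (hcomm : ∀ x y, f x = 1 → g y = 1 → Commute (α x) (γ y)) :
    ∀ p q : A × C, f p.1 = g p.2 → f q.1 = g q.2 →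
      (fun p : A × C => α (p.1 * (r (f p.1))⁻¹) * γ p.2) (p * q) =
      (fun p : A × C => α (p.1 * (r (f p.1))⁻¹) * γ p.2) p *
      (fun p : A × C => α (p.1 * (r (f p.1))⁻¹) * γ p.2) q := by
  rintro ⟨a, c⟩ ⟨a₂, c₂⟩ h h₂
  simp only at h h₂
  have key := (hcomm (a₂ * (r (f a₂))⁻¹) ((s (f a))⁻¹ * c) (by simp [hfr]) (by simp [hgs, h])).eq
  simp only [map_mul, map_inv, ← hβ] at key
  simp only [Prod.mk_mul_mk, map_mul, map_inv, mul_inv_rev]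
  calc _ = α a * (α (r (f a)))⁻¹ * α (r (f a)) *
        (α a₂ * (α (r (f a₂)))⁻¹ * ((α (r (f a)))⁻¹ * γ c)) * γ c₂ := by group
    _ = _ := by rw [key]; group
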